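/- Weighted derivative estimate for low-frequency projections (Lemma 2.5, estimate (2.9)). Let D ≥ 1 and let R ≥ 16 be dyadic. There exists a constant C = C(D) such that for every measurable φ : ℝ → ℂ with ‖⟨x⟩^{-D} φ‖_{L¹(ℝ)} < ∞, one has ‖ √σ_R · ∂ₓ P_{≤R} φ ‖_{L²(ℝ)} ≤ C ( R ‖ √σ_R · P_{≤R} φ ‖_{L²(ℝ)} + R^{-D} ‖⟨x⟩^{-D} φ‖_{L¹(ℝ)} ). -/

import Mathlib

open MeasureTheory Real Set ENNReal

noncomputable section

/-- The Japanese bracket `⟨x⟩ = √(1 + x²)`. -/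
def jap (x : ℝ) : ℝ := Real.sqrt (1 + x ^ 2)

/-- The inverse Fourier transform `ǧ(x) = (2π)^{-1/2} ∫ g(ξ) e^{i x ξ} dξ`. -/
def invFourier (g : ℝ → ℝ) (x : ℝ) : ℂ :=
  (Real.sqrt (2 * Real.pi) : ℂ)⁻¹ * ∫ ξ : ℝ, (g ξ : ℂ) * Complex.exp (Complex.I * ((x * ξ : ℝ) : ℂ))

/-- `ρ` is an admissible Littlewood–Paley bump function: smooth, `[0,1]`-valued, equal to `1`
on `[-1,1]` and vanishing outside of `[-9/8, 9/8]`. -/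
def IsLPBump (ρ : ℝ → ℝ) : Prop :=
  ContDiff ℝ (⊤ : ℕ∞) ρ ∧ (∀ ξ, ρ ξ ∈ Set.Icc (0 : ℝ) 1) ∧
    (∀ ξ ∈ Set.Icc (-1 : ℝ) 1, ρ ξ = 1) ∧
    ∀ ξ, ξ ∉ Set.Icc (-(9/8) : ℝ) (9/8) → ρ ξ = 0

/-- The symbol `ρ_{≤N}(ξ) = ρ(ξ/N)`. -/
def rhoLE (ρ : ℝ → ℝ) (N : ℝ) (ξ : ℝ) : ℝ := ρ (ξ / N)

open scoped Classical in
/-- The symbol `ρ_N`: `ρ_1 = ρ_{≤1}` and `ρ_N = ρ_{≤N} - ρ_{≤N/2}` for dyadic `N ≥ 2`. -/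
def rhoD (ρ : ℝ → ℝ) (N : ℝ) (ξ : ℝ) : ℝ :=
  if N = 1 then ρ ξ else ρ (ξ / N) - ρ (2 * ξ / N)

/-- The Littlewood–Paley projection `P_{≤N} φ = ρ̌_{≤N} ∗ φ`. -/
def PLE (ρ : ℝ → ℝ) (N : ℝ) (φ : ℝ → ℂ) (x : ℝ) : ℂ :=
  ∫ y : ℝ, invFourier (rhoLE ρ N) y * φ (x - y)

/-- The Littlewood–Paley projection `P_N φ = ρ̌_N ∗ φ`. -/
def PD (ρ : ℝ → ℝ) (N : ℝ) (φ : ℝ → ℂ) (x : ℝ) : ℂ :=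
  ∫ y : ℝ, invFourier (rhoD ρ N) y * φ (x - y)

/-- The weighted norm `‖⟨x⟩^{-D} φ‖_{L¹(ℝ)}`. -/
def wL1 (D : ℝ) (φ : ℝ → ℂ) : ℝ := ∫ x : ℝ, jap x ^ (-D) * ‖φ x‖

/-- The weight `σ_R(x) = exp(-⟨x/R⟩)`. -/
def sigmaW (R x : ℝ) : ℝ := Real.exp (-jap (x / R))

/-- The weighted `L²`-norm `‖√σ_R · f‖_{L²(ℝ)}`. -/
def wSigmaL2 (R : ℝ) (f : ℝ → ℂ) : ℝ≥0∞ :=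
  eLpNorm (fun x => (Real.sqrt (sigmaW R x) : ℂ) * f x) 2 volume

/-!
The convolution kernel of `P_{≤R}` has compactly supported symbol, so it is reproduced by a Schwartz
kernel at the same frequency scale: `P_{≤R} φ = B_R ∗ P_{≤R} φ` with `B_R x = R B(R x)`. Hence
`∂ₓ P_{≤R} φ = R (B')_R ∗ P_{≤R} φ`, and it remains to bound convolution with `(B')_R` in the
weighted `L²` space. Over translations of length at most `R` the weight changes by a bounded factor
and Young's inequality applies. Over longer ones the rapid decay of `B'`, together with that of the
weight, beats the polynomial growth `|P_{≤R} φ(x)| ≲ R ‖⟨·⟩^{-D} φ‖_{L¹} ⟨x⟩^{|D|}` and yields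
any negative power of `R`.
-/

open ContinuousLinearMap
open scoped Convolution FourierTransform SchwartzMap

section JapaneseBracket

variable {R s x : ℝ}

lemma one_le_jap (x : ℝ) : 1 ≤ jap x := one_le_sqrt.2 (by linarith [sq_nonneg x])

lemma jap_pos (x : ℝ) : 0 < jap x := zero_lt_one.trans_le (one_le_jap x)

lemma jap_sq (x : ℝ) : jap x ^ 2 = 1 + x ^ 2 := sq_sqrt (by positivity)

lemma continuous_jap : Continuous jap := by unfold jap; fun_prop

lemma continuous_jap_rpow (s : ℝ) : Continuous fun x => jap x ^ s :=
  continuous_jap.rpow_const fun x => .inl (jap_pos x).ne'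

lemma jap_neg (x : ℝ) : jap (-x) = jap x := by simp only [jap, neg_sq]

lemma abs_le_jap (x : ℝ) : |x| ≤ jap x := abs_le_sqrt (by linarith)

lemma jap_le_add_abs_sub (x y : ℝ) : jap x ≤ jap y + |x - y| := by
  have hy := jap_pos y
  have hcross : y * (x - y) ≤ jap y * |x - y| :=
    (le_abs_self _).trans (by rw [abs_mul]; gcongr; exact abs_le_jap y)
  exact sqrt_le_iff.2 ⟨by positivity, by nlinarith [jap_sq y, sq_abs (x - y)]⟩

lemma jap_le_one_add_abs (x : ℝ) : jap x ≤ 1 + |x| := by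
  simpa [jap] using jap_le_add_abs_sub x 0

/-- Peetre's inequality. -/
lemma jap_add_le (x y : ℝ) : jap (x + y) ≤ 2 * jap x * jap y := by
  have hx := jap_pos x
  have hy := jap_pos y
  refine (abs_le_of_sq_le_sq' ?_ (by positivity)).2
  rw [mul_pow, mul_pow, jap_sq, jap_sq, jap_sq]
  nlinarith [sq_nonneg (x - y), sq_nonneg (x * y), sq_nonneg x, sq_nonneg y]

lemma jap_rpow_add_le (hs : 0 ≤ s) (x y : ℝ) :
    jap (x + y) ^ s ≤ 2 ^ s * jap x ^ s * jap y ^ s := by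
  have hx := jap_pos x
  have hy := jap_pos y
  rw [← mul_rpow (by positivity) hx.le, ← mul_rpow (by positivity) hy.le]
  exact rpow_le_rpow (jap_pos _).le (jap_add_le x y) hs

lemma jap_sub_rpow_neg_abs_le (s x y : ℝ) :
    jap (x - y) ^ (-|s|) ≤ 2 ^ |s| * jap x ^ |s| * jap y ^ (-s) := by
  have hy := jap_pos y
  have hxy := jap_pos (x - y)
  have hpeetre : jap y ^ |s| ≤ 2 ^ |s| * jap x ^ |s| * jap (x - y) ^ |s| := by
    simpa [← jap_neg (x - y)] using jap_rpow_add_le (abs_nonneg s) x (y - x)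
  calc jap (x - y) ^ (-|s|)
      = jap y ^ |s| * (jap (x - y) ^ (-|s|) * jap y ^ (-|s|)) := by
        rw [rpow_neg hy.le]; field_simp
    _ ≤ (2 ^ |s| * jap x ^ |s| * jap (x - y) ^ |s|) *
          (jap (x - y) ^ (-|s|) * jap y ^ (-|s|)) := by gcongr
    _ = 2 ^ |s| * jap x ^ |s| * jap y ^ (-|s|) := by
        rw [rpow_neg hxy.le]; field_simp
    _ ≤ 2 ^ |s| * jap x ^ |s| * jap y ^ (-s) := by
        have hx := jap_pos x
        gcongr
        exacts [one_le_jap y, le_abs_self s]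

lemma jap_le_jap_mul (hR : 1 ≤ R) (x : ℝ) : jap x ≤ jap (R * x) := by
  have : 1 ≤ R ^ 2 := one_le_pow₀ hR
  exact sqrt_le_sqrt (by nlinarith [sq_nonneg x])

lemma jap_mul_le (hR : 1 ≤ R) (x : ℝ) : jap (R * x) ≤ R * jap x := by
  have : 1 ≤ R ^ 2 := one_le_pow₀ hR
  have hx := jap_pos x
  exact sqrt_le_iff.2 ⟨by positivity, by rw [mul_pow, mul_pow, jap_sq]; linarith⟩

lemma le_jap_mul (hR : 0 ≤ R) (hx : 1 ≤ |x|) : R ≤ jap (R * x) :=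
  calc R ≤ R * |x| := le_mul_of_one_le_right hR hx
    _ = |R * x| := by rw [abs_mul, abs_of_nonneg hR]
    _ ≤ jap (R * x) := abs_le_jap _

lemma integrable_jap_rpow_neg (hs : 1 < s) : Integrable fun x => jap x ^ (-s) := by
  have h := integrable_rpow_neg_one_add_norm_sq (E := ℝ) (μ := volume) (r := s) (by simpa using hs)
  refine h.congr (.of_forall fun x => ?_)
  simp only [jap, sqrt_eq_rpow, norm_eq_abs, sq_abs, ← rpow_mul (by positivity : 0 ≤ 1 + x ^ 2)]
  ring_nf

lemma memLp_two_jap_inv : MemLp (fun x => (jap x)⁻¹) 2 := by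
  refine (memLp_two_iff_integrable_sq continuous_jap.measurable.inv.aestronglyMeasurable).2 ?_
  refine (integrable_jap_rpow_neg one_lt_two).congr (.of_forall fun x => ?_)
  simp only [Pi.inv_apply, rpow_neg (jap_pos x).le, Real.rpow_two, inv_pow]

variable {E : Type*} [NormedAddCommGroup E] {A C d : ℝ} {φ : ℝ → E}

lemma nonneg_of_norm_le_mul_jap_rpow (hφ : ∀ x, ‖φ x‖ ≤ C * jap x ^ s) : 0 ≤ C :=
  nonneg_of_mul_nonneg_left ((norm_nonneg _).trans (hφ 0)) (rpow_pos_of_pos (jap_pos 0) s)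

lemma integrable_jap_rpow_neg_mul_norm_of_norm_le (hφ : AEStronglyMeasurable φ)
    (hφA : ∀ x, ‖φ x‖ ≤ A * jap x ^ d) : Integrable fun x => jap x ^ (-(d + 2)) * ‖φ x‖ := by
  refine ((integrable_jap_rpow_neg one_lt_two).const_mul A).mono'
    ((continuous_jap_rpow _).aestronglyMeasurable.mul hφ.norm) (.of_forall fun x => ?_)
  have hx := jap_pos x
  rw [norm_of_nonneg (by positivity)]
  calc jap x ^ (-(d + 2)) * ‖φ x‖ ≤ jap x ^ (-(d + 2)) * (A * jap x ^ d) := by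
        gcongr; exact hφA x
    _ = A * jap x ^ (-2 : ℝ) := by
        rw [mul_left_comm, ← rpow_add hx]; ring_nf

lemma exists_norm_schwartz_le_jap_rpow [NormedSpace ℝ E] (F : 𝓢(ℝ, E)) (s : ℝ) :
    ∃ C : ℝ, 0 < C ∧ ∀ x, ‖F x‖ ≤ C * jap x ^ (-s) := by
  obtain ⟨n, hn⟩ := exists_nat_ge s
  set S := 2 ^ n * ((Finset.Iic (n, 0)).sup fun m => SchwartzMap.seminorm ℝ m.1 m.2) F
  refine ⟨|S| + 1, by positivity, fun x => ?_⟩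
  have hx := jap_pos x
  have hpow : jap x ^ s ≤ (1 + |x|) ^ n :=
    calc jap x ^ s ≤ jap x ^ (n : ℝ) := rpow_le_rpow_of_exponent_le (one_le_jap x) hn
      _ ≤ (1 + |x|) ^ n := by rw [Real.rpow_natCast]; gcongr; exact jap_le_one_add_abs x
  have hseminorm : (1 + |x|) ^ n * ‖F x‖ ≤ S := by
    simpa using SchwartzMap.one_add_le_sup_seminorm_apply (𝕜 := ℝ) (m := (n, 0)) le_rfl le_rfl F x
  rw [rpow_neg hx.le, ← div_eq_mul_inv, le_div_iff₀ (by positivity), mul_comm]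
  calc jap x ^ s * ‖F x‖ ≤ (1 + |x|) ^ n * ‖F x‖ := by gcongr
    _ ≤ |S| + 1 := by linarith [le_abs_self S]

end JapaneseBracket

section Weight

variable {R s x y : ℝ}

lemma sqrt_sigmaW (R x : ℝ) : √(sigmaW R x) = exp (-jap (x / R) / 2) := (exp_half _).symm

lemma continuous_sqrt_sigmaW (R : ℝ) : Continuous fun x => √(sigmaW R x) := by
  have := continuous_jap
  simp_rw [sqrt_sigmaW]
  fun_prop

lemma sqrt_sigmaW_le_of_abs_sub_le (hR : 0 < R) (hxy : |x - y| ≤ R) :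
    √(sigmaW R x) ≤ exp (1 / 2) * √(sigmaW R y) := by
  rw [sqrt_sigmaW, sqrt_sigmaW, ← exp_add, exp_le_exp]
  have hlip := jap_le_add_abs_sub (y / R) (x / R)
  have hdist : |y / R - x / R| ≤ 1 := by
    rw [← sub_div, abs_div, abs_of_pos hR, abs_sub_comm]
    exact (div_le_one hR).2 hxy
  linarith

lemma sqrt_sigmaW_mul_jap_rpow_le (hR : 1 ≤ R) (hs : 0 ≤ s) (x : ℝ) :
    √(sigmaW R x) * jap x ^ s ≤ (2 * s) ^ s * R ^ s := by
  have hR0 : 0 < R := by linarith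
  set t := jap (x / R)
  have ht : 0 < t := jap_pos _
  have hxt : jap x ≤ R * t := by simpa [mul_div_cancel₀ x hR0.ne'] using jap_mul_le hR (x / R)
  have hexp : t ^ s ≤ (2 * s) ^ s * exp (t / 2) := by
    have h := ProbabilityTheory.rpow_abs_le_mul_exp_abs t hs (t := 1 / 2) (by norm_num)
    rw [abs_of_pos ht, abs_of_pos one_half_pos] at h
    convert! h using 3 <;> ring
  calc √(sigmaW R x) * jap x ^ s
      ≤ exp (-t / 2) * (R * t) ^ s := by
        rw [sqrt_sigmaW]; have := jap_pos x; gcongr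
    _ = exp (-t / 2) * R ^ s * t ^ s := by rw [mul_rpow hR0.le ht.le, mul_assoc]
    _ ≤ exp (-t / 2) * R ^ s * ((2 * s) ^ s * exp (t / 2)) := by gcongr
    _ = (exp (-t / 2) * exp (t / 2)) * ((2 * s) ^ s * R ^ s) := by ring
    _ = (2 * s) ^ s * R ^ s := by rw [← exp_add, neg_div, neg_add_cancel, exp_zero, one_mul]

end Weight

section Young

variable {G : Type*} [AddGroup G] [MeasurableSpace G] [MeasurableAdd₂ G] [MeasurableNeg G]
  {μ : Measure G} {f g : G → ℝ≥0∞}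

lemma lconvolution_rpow_le (hf : Measurable f) (hg : Measurable g) {r : ℝ} (hr : 1 ≤ r) (x : G) :
    (f ⋆ₗ[μ] g) x ^ r ≤ (∫⁻ y, f y ∂μ) ^ (r - 1) * (f ⋆ₗ[μ] fun y => g y ^ r) x := by
  have hr0 : 0 < r := by linarith
  have hr1 : 0 ≤ 1 - r⁻¹ := sub_nonneg.2 (inv_le_one_of_one_le₀ hr)
  have hsplit (y : G) : f y * g (-y + x) = f y ^ (1 - r⁻¹) * (f y * g (-y + x) ^ r) ^ r⁻¹ := by
    rw [mul_rpow_of_nonneg _ _ (inv_nonneg.2 hr0.le), ← ENNReal.rpow_mul, mul_inv_cancel₀ hr0.ne',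
      ENNReal.rpow_one, ← mul_assoc, ← rpow_add_of_nonneg _ _ hr1 (by positivity), sub_add_cancel,
      ENNReal.rpow_one]
  calc (f ⋆ₗ[μ] g) x ^ r
      ≤ ((∫⁻ y, f y ∂μ) ^ (1 - r⁻¹) * (∫⁻ y, f y * g (-y + x) ^ r ∂μ) ^ r⁻¹) ^ r := by
        rw [lconvolution_def]
        simp_rw [hsplit]
        gcongr
        exact lintegral_mul_norm_pow_le hf.aemeasurable (by fun_prop) hr1 (by positivity) (by ring)
    _ = (∫⁻ y, f y ∂μ) ^ (r - 1) * (f ⋆ₗ[μ] fun y => g y ^ r) x := by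
        rw [mul_rpow_of_nonneg _ _ hr0.le, ← ENNReal.rpow_mul, ← ENNReal.rpow_mul,
          inv_mul_cancel₀ hr0.ne', ENNReal.rpow_one, sub_mul, one_mul, inv_mul_cancel₀ hr0.ne',
          lconvolution_def]

variable [SFinite μ] [μ.IsAddLeftInvariant]

lemma lintegral_lconvolution (hf : Measurable f) (hg : Measurable g) :
    ∫⁻ x, (f ⋆ₗ[μ] g) x ∂μ = (∫⁻ x, f x ∂μ) * ∫⁻ x, g x ∂μ := by
  simp_rw [lconvolution_def]
  rw [lintegral_lintegral_swap (by fun_prop), ← lintegral_mul_const _ hf]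
  refine lintegral_congr fun y => ?_
  rw [lintegral_const_mul _ (by fun_prop), lintegral_add_left_eq_self]

/-- Young's convolution inequality for `L¹` and `Lᵖ`. -/
lemma eLpNorm_lconvolution_le {p : ℝ≥0∞} (hp : 1 ≤ p) (hp_top : p ≠ ∞) (hf : Measurable f)
    (hg : Measurable g) : eLpNorm (f ⋆ₗ[μ] g) p μ ≤ (∫⁻ x, f x ∂μ) * eLpNorm g p μ := by
  have hp0 : p ≠ 0 := (one_pos.trans_le hp).ne'
  have hr : 1 ≤ p.toReal := by simpa using toReal_mono hp_top hp
  simp only [eLpNorm_eq_lintegral_rpow_enorm_toReal hp0 hp_top, enorm_eq_self]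
  set r := p.toReal
  have hr0 : 0 < r := by linarith
  calc (∫⁻ x, (f ⋆ₗ[μ] g) x ^ r ∂μ) ^ (1 / r)
      ≤ (∫⁻ x, (∫⁻ y, f y ∂μ) ^ (r - 1) * (f ⋆ₗ[μ] fun y => g y ^ r) x ∂μ) ^ (1 / r) := by
        gcongr with x
        exact lconvolution_rpow_le hf hg hr x
    _ = ((∫⁻ x, f x ∂μ) ^ r * ∫⁻ x, g x ^ r ∂μ) ^ (1 / r) := by
        have hgr : Measurable fun y => g y ^ r := hg.pow_const r
        rw [lintegral_const_mul _ (measurable_lconvolution μ hf hgr),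
          lintegral_lconvolution hf hgr, ← mul_assoc]
        nth_rw 2 [← ENNReal.rpow_one (∫⁻ x, f x ∂μ)]
        rw [← rpow_add_of_nonneg _ _ (by linarith) zero_le_one, sub_add_cancel]
    _ = (∫⁻ x, f x ∂μ) * (∫⁻ x, g x ^ r ∂μ) ^ (1 / r) := by
        rw [mul_rpow_of_nonneg _ _ (by positivity), ← ENNReal.rpow_mul, mul_one_div_cancel hr0.ne',
          ENNReal.rpow_one]

end Young

section Dilate

variable {E : Type*} [NormedAddCommGroup E] [NormedSpace ℝ E] {R : ℝ}

/-- The `L¹`-normalised dilation `x ↦ R k(R x)`. A kernel at frequency scale `1` becomes one at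
frequency scale `R`. -/
def dilate (R : ℝ) (k : ℝ → E) (x : ℝ) : E := R • k (R * x)

lemma continuous_dilate (R : ℝ) {k : ℝ → E} (hk : Continuous k) : Continuous (dilate R k) := by
  unfold dilate
  fun_prop

lemma integrable_dilate (hR : R ≠ 0) {k : ℝ → E} (hk : Integrable k) : Integrable (dilate R k) :=
  (hk.comp_mul_left' hR).smul R

lemma hasDerivAt_dilate {k k' : ℝ → E} (hk : ∀ x, HasDerivAt k (k' x) x) (x : ℝ) :
    HasDerivAt (dilate R k) ((R • dilate R k') x) x := by
  have h := ((hk (R * x)).scomp x ((hasDerivAt_id x).const_mul R)).fun_const_smul R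
  exact h.congr_deriv (by simp [dilate])

lemma norm_dilate (hR : 0 ≤ R) (k : ℝ → E) (x : ℝ) : ‖dilate R k x‖ = R * ‖k (R * x)‖ := by
  rw [dilate, norm_smul, norm_of_nonneg hR]

lemma norm_dilate_le {s C : ℝ} (hR : 1 ≤ R) (hs : 0 ≤ s) {k : ℝ → E}
    (hk : ∀ x, ‖k x‖ ≤ C * jap x ^ (-s)) (x : ℝ) :
    ‖dilate R k x‖ ≤ R * C * jap x ^ (-s) := by
  have hC := nonneg_of_norm_le_mul_jap_rpow hk
  rw [norm_dilate (by linarith), mul_assoc]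
  have hdecay : jap (R * x) ^ (-s) ≤ jap x ^ (-s) :=
    rpow_le_rpow_of_nonpos (jap_pos x) (jap_le_jap_mul hR x) (by linarith)
  gcongr
  exact (hk _).trans (by gcongr)

/-- Away from the origin the decay of `k` is worth a negative power of `R`. -/
lemma norm_dilate_le_of_one_le_abs {a b C x : ℝ} (hR : 1 ≤ R) (ha : 0 ≤ a) (hb : 0 ≤ b)
    {k : ℝ → E} (hk : ∀ x, ‖k x‖ ≤ C * jap x ^ (-(a + b))) (hx : 1 ≤ |x|) :
    ‖dilate R k x‖ ≤ C * R ^ (1 - a) * jap x ^ (-b) := by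
  have hC := nonneg_of_norm_le_mul_jap_rpow hk
  have hR0 : 0 < R := by linarith
  have hRx : jap (R * x) ^ (-a) ≤ R ^ (-a) :=
    rpow_le_rpow_of_nonpos hR0 (le_jap_mul hR0.le hx) (by linarith)
  have hdecay : jap (R * x) ^ (-b) ≤ jap x ^ (-b) :=
    rpow_le_rpow_of_nonpos (jap_pos x) (jap_le_jap_mul hR x) (by linarith)
  have := jap_pos (R * x)
  calc ‖dilate R k x‖ ≤ R * (C * (jap (R * x) ^ (-a) * jap (R * x) ^ (-b))) := by
        rw [norm_dilate hR0.le, ← rpow_add (jap_pos _), ← neg_add]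
        gcongr
        exact hk _
    _ ≤ R * (C * (R ^ (-a) * jap x ^ (-b))) := by gcongr
    _ = C * R ^ (1 - a) * jap x ^ (-b) := by
        rw [sub_eq_add_neg, rpow_add hR0, Real.rpow_one]; ring

lemma lintegral_enorm_dilate (hR : 0 < R) (k : ℝ → E) :
    ∫⁻ x, ‖dilate R k x‖ₑ = ∫⁻ x, ‖k x‖ₑ := by
  have hscale := (measurableEmbedding_mulLeft₀ hR.ne').lintegral_map (fun x => ‖k x‖ₑ) (μ := volume)
  rw [Real.map_volume_mul_left hR.ne', lintegral_smul_measure, abs_of_pos (inv_pos.2 hR)] at hscale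
  simp_rw [dilate, enorm_smul]
  rw [lintegral_const_mul' _ _ enorm_ne_top, ← hscale, smul_eq_mul, ← mul_assoc,
    enorm_eq_ofReal hR.le, ← ENNReal.ofReal_mul hR.le, mul_inv_cancel₀ hR.ne', ENNReal.ofReal_one,
    one_mul]

lemma dilate_convolution {E' F : Type*} [NormedAddCommGroup E'] [NormedSpace ℝ E']
    [NormedAddCommGroup F] [NormedSpace ℝ F] (L : E →L[ℝ] E' →L[ℝ] F) (hR : 0 < R)
    (k : ℝ → E) (g : ℝ → E') : dilate R (k ⋆[L] g) = dilate R k ⋆[L] dilate R g := by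
  ext x
  have hscale := Measure.integral_comp_mul_left (fun t => L (k t) (g (R * x - t))) R
  rw [abs_of_pos (inv_pos.2 hR)] at hscale
  simp only [dilate, convolution_def, map_smul, _root_.smul_apply, mul_sub, integral_smul, hscale,
    smul_inv_smul₀ hR.ne']

lemma invFourier_rhoLE (hR : 0 < R) (ρ : ℝ → ℝ) :
    invFourier (rhoLE ρ R) = dilate R (invFourier ρ) := by
  ext x
  have hscale := Measure.integral_comp_div
    (fun ξ => (ρ ξ : ℂ) * Complex.exp (Complex.I * ((R * x * ξ : ℝ) : ℂ))) R
  have hphase (ξ : ℝ) : R * x * (ξ / R) = x * ξ := by field_simp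
  simp only [hphase, abs_of_pos hR] at hscale
  simp only [dilate, invFourier, rhoLE, hscale, mul_smul_comm]

end Dilate

section WeightedConvolution

variable {E E' F : Type*} [NormedAddCommGroup E] [NormedSpace ℝ E] [NormedAddCommGroup E']
  [NormedSpace ℝ E'] [NormedAddCommGroup F] [NormedSpace ℝ F] (L : E →L[ℝ] E' →L[ℝ] F)
  {C D : ℝ} {k : ℝ → E} {φ : ℝ → E'}

lemma norm_apply_sub_le (hk : ∀ x, ‖k x‖ ≤ C * jap x ^ (-|D|)) (x y : ℝ) :
    ‖L (k (x - y)) (φ y)‖ ≤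
      ‖L‖ * C * 2 ^ |D| * jap x ^ |D| * (jap y ^ (-D) * ‖φ y‖) := by
  have hC := nonneg_of_norm_le_mul_jap_rpow hk
  calc ‖L (k (x - y)) (φ y)‖ ≤ ‖L‖ * (C * jap (x - y) ^ (-|D|)) * ‖φ y‖ := by
        refine (L.le_opNorm₂ _ _).trans ?_
        gcongr
        exact hk _
    _ ≤ ‖L‖ * (C * (2 ^ |D| * jap x ^ |D| * jap y ^ (-D))) * ‖φ y‖ := by
        gcongr
        exact jap_sub_rpow_neg_abs_le D x y
    _ = _ := by ring

lemma convolutionExistsAt_of_norm_le (hkm : AEStronglyMeasurable k)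
    (hk : ∀ x, ‖k x‖ ≤ C * jap x ^ (-|D|)) (hφ : AEStronglyMeasurable φ)
    (hφi : Integrable fun x => jap x ^ (-D) * ‖φ x‖) (x : ℝ) : ConvolutionExistsAt k φ x L :=
  convolutionExistsAt_iff_integrable_swap.2 <| (hφi.const_mul _).mono'
    (hkm.convolution_integrand_swap_snd L hφ x) (.of_forall (norm_apply_sub_le L hk x))

lemma norm_convolution_le (hk : ∀ x, ‖k x‖ ≤ C * jap x ^ (-|D|))
    (hφi : Integrable fun x => jap x ^ (-D) * ‖φ x‖) (x : ℝ) :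
    ‖(k ⋆[L] φ) x‖ ≤
      ‖L‖ * C * 2 ^ |D| * (∫ y, jap y ^ (-D) * ‖φ y‖) * jap x ^ |D| := by
  rw [convolution_eq_swap, mul_right_comm, ← integral_const_mul]
  exact norm_integral_le_of_norm_le (hφi.const_mul _) (.of_forall (norm_apply_sub_le L hk x))

lemma aestronglyMeasurable_convolution (hkm : AEStronglyMeasurable k)
    (hφ : AEStronglyMeasurable φ) : AEStronglyMeasurable (k ⋆[L] φ) :=
  (hkm.convolution_integrand L hφ).integral_prod_right'

lemma hasDerivAt_convolution_of_norm_le {k' : ℝ → E} {C' : ℝ}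
    (hk : ∀ x, ‖k x‖ ≤ C * jap x ^ (-|D|)) (hk'm : AEStronglyMeasurable k')
    (hk' : ∀ x, ‖k' x‖ ≤ C' * jap x ^ (-|D|)) (hkk' : ∀ x, HasDerivAt k (k' x) x)
    (hφ : AEStronglyMeasurable φ) (hφi : Integrable fun x => jap x ^ (-D) * ‖φ x‖) (x : ℝ) :
    HasDerivAt (k ⋆[L] φ) ((k' ⋆[L] φ) x) x := by
  have hC' := nonneg_of_norm_le_mul_jap_rpow hk'
  have hkm : AEStronglyMeasurable k :=
    (continuous_iff_continuousAt.2 fun x => (hkk' x).continuousAt).aestronglyMeasurable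
  have hbound (y : ℝ) (hy : y ∈ Metric.ball x 1) (z : ℝ) : ‖L (k' (y - z)) (φ z)‖ ≤
      ‖L‖ * C' * 2 ^ |D| * (2 + |x|) ^ |D| * (jap z ^ (-D) * ‖φ z‖) := by
    refine (norm_apply_sub_le L hk' y z).trans ?_
    have hy2 : jap y ≤ 2 + |x| := by
      rw [Metric.mem_ball, dist_eq] at hy
      linarith [jap_le_one_add_abs y, abs_sub_abs_le_abs_sub y x]
    have := jap_pos y
    have := jap_pos z
    gcongr
  have hswap : k ⋆[L] φ = fun x => ∫ z, L (k (x - z)) (φ z) := funext fun x => convolution_eq_swap L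
  rw [hswap, convolution_eq_swap]
  exact (hasDerivAt_integral_of_dominated_loc_of_deriv_le (Metric.ball_mem_nhds x one_pos)
    (.of_forall fun y => hkm.convolution_integrand_swap_snd L hφ y)
    (convolutionExistsAt_of_norm_le L hkm hk hφ hφi x).integrable_swap
    (hk'm.convolution_integrand_swap_snd L hφ x)
    (.of_forall fun z y hy => hbound y hy z) (hφi.const_mul _)
    (.of_forall fun z y _ =>
      (L.flip (φ z)).hasFDerivAt.comp_hasDerivAt y ((hkk' (y - z)).comp_sub_const y z))).2

end WeightedConvolution

section ReproducingKernel

lemma exists_schwartz_convolution_eq_self {V : Type*} [NormedAddCommGroup V]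
    [InnerProductSpace ℝ V] [FiniteDimensional ℝ V] [MeasurableSpace V] [BorelSpace V]
    (G : 𝓢(V, ℂ)) (hG : HasCompactSupport (𝓕 G : 𝓢(V, ℂ))) :
    ∃ B : 𝓢(V, ℂ), B ⋆[mul ℝ ℂ] G = G := by
  obtain ⟨r, hr, hGr⟩ := hG.isCompact.isBounded.subset_closedBall_lt 0 0
  let χ : ContDiffBump (0 : V) := ⟨r, r + 1, hr, by linarith⟩
  let X : 𝓢(V, ℂ) := (χ.hasCompactSupport.comp_left Complex.ofReal_zero).toSchwartzMap
    (Complex.ofRealCLM.contDiff.comp χ.contDiff)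
  have hX : SchwartzMap.pairing (mul ℂ ℂ) X (𝓕 G) = 𝓕 G := by
    ext v
    change (χ v : ℂ) * 𝓕 G v = 𝓕 G v
    by_cases hv : v ∈ tsupport (𝓕 G : 𝓢(V, ℂ))
    · rw [χ.one_of_mem_closedBall (hGr hv), Complex.ofReal_one, one_mul]
    · rw [image_eq_zero_of_notMem_tsupport hv, mul_zero]
  have hconv : SchwartzMap.convolution (mul ℂ ℂ) (𝓕⁻ X) G = G := by
    rw [← FourierTransform.fourierInv_fourier_eq (F := 𝓢(V, ℂ))
      (SchwartzMap.convolution (mul ℂ ℂ) _ _), SchwartzMap.fourier_convolution,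
      FourierTransform.fourier_fourierInv_eq, hX, FourierTransform.fourierInv_fourier_eq]
  refine ⟨𝓕⁻ X, funext fun x => ?_⟩
  conv_rhs => rw [← hconv, SchwartzMap.convolution_apply]
  rfl

lemma invFourier_eq_fourierInv (g : ℝ → ℝ) :
    invFourier g = 𝓕⁻ fun v => (√(2 * π) : ℂ) * g (2 * π * v) := by
  ext x
  have h2π : 0 < 2 * π := by positivity
  have hscale := Measure.integral_comp_mul_left
    (fun ξ => (g ξ : ℂ) * Complex.exp (Complex.I * ((x * ξ : ℝ) : ℂ))) (2 * π)
  have hsqrt : (√(2 * π))⁻¹ = √(2 * π) * (2 * π)⁻¹ := by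
    rw [← div_eq_mul_inv, sqrt_div_self']; simp
  rw [abs_of_pos (inv_pos.2 h2π), Complex.real_smul] at hscale
  rw [invFourier, ← Complex.ofReal_inv, hsqrt, Complex.ofReal_mul, mul_assoc, ← hscale,
    ← integral_const_mul, Real.fourierInv_eq']
  refine integral_congr_ae (.of_forall fun v => ?_)
  simp only [RCLike.inner_apply, conj_trivial, smul_eq_mul]
  push_cast
  ring_nf

lemma exists_schwartz_eq_invFourier {g : ℝ → ℝ} (hg : ContDiff ℝ (⊤ : ℕ∞) g)
    (hc : HasCompactSupport g) :
    ∃ G : 𝓢(ℝ, ℂ), HasCompactSupport (𝓕 G : 𝓢(ℝ, ℂ)) ∧ G = invFourier g := by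
  have hcomp : HasCompactSupport fun v => (√(2 * π) : ℂ) * g (2 * π * v) :=
    ((hc.comp_smul (by positivity : 2 * π ≠ 0)).comp_left Complex.ofReal_zero).mul_left
  have hsmooth : ContDiff ℝ (⊤ : ℕ∞) fun v => (√(2 * π) : ℂ) * g (2 * π * v) :=
    contDiff_const.mul (Complex.ofRealCLM.contDiff.comp (hg.comp (contDiff_const.mul contDiff_id)))
  refine ⟨𝓕⁻ (hcomp.toSchwartzMap hsmooth), ?_, ?_⟩
  · rw [FourierTransform.fourier_fourierInv_eq]
    exact hcomp
  · rw [invFourier_eq_fourierInv, SchwartzMap.fourierInv_coe]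
    rfl

end ReproducingKernel

section SchwartzKernel

variable {D R : ℝ} {φ : ℝ → ℂ}

lemma exists_norm_dilate_schwartz_le (H : 𝓢(ℝ, ℂ)) (s : ℝ) :
    ∃ C : ℝ, 0 < C ∧ ∀ R, 1 ≤ R → ∀ x, ‖dilate R H x‖ ≤ R * C * jap x ^ (-|s|) := by
  obtain ⟨C, hC, hH⟩ := exists_norm_schwartz_le_jap_rpow H |s|
  exact ⟨C, hC, fun R hR => norm_dilate_le hR (abs_nonneg s) hH⟩

lemma exists_norm_dilate_convolution_le (G : 𝓢(ℝ, ℂ)) (D : ℝ) :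
    ∃ C : ℝ, 0 < C ∧ ∀ R, 1 ≤ R → ∀ φ : ℝ → ℂ, Integrable (fun x => jap x ^ (-D) * ‖φ x‖) →
      ∀ x, ‖(dilate R G ⋆[mul ℝ ℂ] φ) x‖ ≤ C * R * wL1 D φ * jap x ^ |D| := by
  obtain ⟨C, hC, hG⟩ := exists_norm_dilate_schwartz_le G D
  refine ⟨C * 2 ^ |D|, by positivity, fun R hR φ hφi x => ?_⟩
  refine (norm_convolution_le (mul ℝ ℂ) (hG R hR) hφi x).trans_eq ?_
  rw [opNorm_mul, wL1]
  ring

lemma dilate_convolution_dilate_convolution_eq {B G : 𝓢(ℝ, ℂ)} (hBG : B ⋆[mul ℝ ℂ] G = G)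
    (hR : 1 ≤ R) (hφ : AEStronglyMeasurable φ) (hφi : Integrable fun x => jap x ^ (-D) * ‖φ x‖) :
    dilate R B ⋆[mul ℝ ℂ] (dilate R G ⋆[mul ℝ ℂ] φ) = dilate R G ⋆[mul ℝ ℂ] φ := by
  obtain ⟨CG, -, hG⟩ := exists_norm_dilate_schwartz_le G D
  obtain ⟨CB, -, hB⟩ := exists_norm_dilate_schwartz_le B (|D| + 2)
  have hR0 : 0 < R := by linarith
  have hGm := (continuous_dilate R G.continuous).aestronglyMeasurable (μ := volume)
  have hBm := (continuous_dilate R B.continuous).aestronglyMeasurable (μ := volume)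
  have hGnorm (x : ℝ) : ‖‖dilate R G x‖‖ ≤ R * CG * jap x ^ (-|D|) := by
    simpa only [norm_norm] using hG R hR x
  have hBnorm (x : ℝ) : ‖‖dilate R B x‖‖ ≤ R * CB * jap x ^ (-|(|D| + 2)|) := by
    simpa only [norm_norm] using hB R hR x
  have hφi' : Integrable fun x => jap x ^ (-D) * ‖‖φ x‖‖ := by simpa only [norm_norm] using hφi
  have hi := integrable_jap_rpow_neg_mul_norm_of_norm_le
    (aestronglyMeasurable_convolution (mul ℝ ℝ) hGm.norm hφ.norm)
    (norm_convolution_le (mul ℝ ℝ) hGnorm hφi')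
  ext x
  rw [← convolution_assoc (mul ℝ ℂ) (mul ℝ ℂ) (mul ℝ ℂ) (mul ℝ ℂ) mul_assoc hBm hGm hφ ?_ ?_ ?_,
    ← dilate_convolution _ hR0, hBG]
  · exact (integrable_dilate hR0.ne' B.integrable).ae_convolution_exists _
      (integrable_dilate hR0.ne' G.integrable)
  · exact .of_forall (convolutionExistsAt_of_norm_le (mul ℝ ℝ) hGm.norm hGnorm hφ.norm hφi')
  · exact convolutionExistsAt_of_norm_le (mul ℝ ℝ) hBm.norm hBnorm
      (aestronglyMeasurable_convolution (mul ℝ ℝ) hGm.norm hφ.norm) hi x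

lemma exists_hasDerivAt_dilate_convolution {G : 𝓢(ℝ, ℂ)}
    (hG : HasCompactSupport (𝓕 G : 𝓢(ℝ, ℂ))) :
    ∃ H : 𝓢(ℝ, ℂ), ∀ D R : ℝ, 1 ≤ R → ∀ φ : ℝ → ℂ, AEStronglyMeasurable φ →
      Integrable (fun x => jap x ^ (-D) * ‖φ x‖) → ∀ x, HasDerivAt (dilate R G ⋆[mul ℝ ℂ] φ)
        (R • (dilate R H ⋆[mul ℝ ℂ] (dilate R G ⋆[mul ℝ ℂ] φ)) x) x := by
  obtain ⟨B, hBG⟩ := exists_schwartz_convolution_eq_self G hG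
  refine ⟨SchwartzMap.derivCLM ℝ ℂ B, fun D R hR φ hφ hφi x => ?_⟩
  set H := SchwartzMap.derivCLM ℝ ℂ B
  obtain ⟨CB, -, hB⟩ := exists_norm_dilate_schwartz_le B (|D| + 2)
  obtain ⟨CH, -, hH⟩ := exists_norm_dilate_schwartz_le H (|D| + 2)
  obtain ⟨CG, -, hGφ⟩ := exists_norm_dilate_convolution_le G D
  have hR0 : 0 ≤ R := by linarith
  have hH' (y : ℝ) : ‖(R • dilate R H) y‖ ≤ R * (R * CH) * jap y ^ (-|(|D| + 2)|) := by
    rw [Pi.smul_apply, norm_smul, norm_of_nonneg hR0, mul_assoc]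
    gcongr
    exact hH R hR y
  have hf : AEStronglyMeasurable (dilate R G ⋆[mul ℝ ℂ] φ) := aestronglyMeasurable_convolution _
    (continuous_dilate R G.continuous).aestronglyMeasurable hφ
  have hderiv := hasDerivAt_convolution_of_norm_le (mul ℝ ℂ) (hB R hR)
    ((continuous_dilate R H.continuous).const_smul R).aestronglyMeasurable hH'
    (hasDerivAt_dilate fun y => B.differentiableAt.hasDerivAt) hf
    (integrable_jap_rpow_neg_mul_norm_of_norm_le hf (hGφ R hR φ hφi)) x
  rwa [smul_convolution, dilate_convolution_dilate_convolution_eq hBG hR hφ hφi] at hderiv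

end SchwartzKernel

section WeightedL2

variable {d R : ℝ}

lemma eLpNorm_le_mul_add_mul {α E : Type*} [MeasurableSpace α] {μ : Measure α}
    [NormedAddCommGroup E] {p a b : ℝ≥0∞} {u : α → E} {g h : α → ℝ≥0∞} (hp : 1 ≤ p)
    (hg : Measurable g) (hh : Measurable h) (hu : ∀ x, ‖u x‖ₑ ≤ a * g x + b * h x) :
    eLpNorm u p μ ≤ a * eLpNorm g p μ + b * eLpNorm h p μ :=
  calc eLpNorm u p μ ≤ eLpNorm ((fun x => a * g x) + fun x => b * h x) p μ :=
        eLpNorm_mono_enorm hu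
    _ ≤ eLpNorm (fun x => a * g x) p μ + eLpNorm (fun x => b * h x) p μ :=
        eLpNorm_add_le (hg.const_mul a).aestronglyMeasurable (hh.const_mul b).aestronglyMeasurable
          hp
    _ ≤ a * eLpNorm g p μ + b * eLpNorm h p μ := by
        gcongr
        · exact eLpNorm_le_mul_eLpNorm_of_ae_le_mul'' p hg.aestronglyMeasurable
            (.of_forall fun x => le_rfl)
        · exact eLpNorm_le_mul_eLpNorm_of_ae_le_mul'' p hh.aestronglyMeasurable
            (.of_forall fun x => le_rfl)

lemma wSigmaL2_const_smul {c : ℝ} (hc : 0 ≤ c) (R : ℝ) (u : ℝ → ℂ) :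
    wSigmaL2 R (c • u) = ENNReal.ofReal c * wSigmaL2 R u := by
  simp only [wSigmaL2, Pi.smul_apply, mul_smul_comm]
  exact (eLpNorm_const_smul c _ 2 volume).trans (by rw [enorm_eq_ofReal hc])

lemma norm_sqrt_sigmaW_mul (R x : ℝ) (z : ℂ) :
    ‖(√(sigmaW R x) : ℂ) * z‖ = √(sigmaW R x) * ‖z‖ := by
  rw [norm_mul, Complex.norm_of_nonneg (sqrt_nonneg _)]

/-- Both the decay of `H` and the weight pay for powers of `R` when the translation exceeds `R`. -/
lemma exists_sqrt_sigmaW_mul_norm_dilate_mul_jap_rpow_le (H : 𝓢(ℝ, ℂ)) (hd : 0 ≤ d) (M : ℝ) :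
    ∃ Q : ℝ, 0 < Q ∧ ∀ R, 1 ≤ R → ∀ x t, R < |t| →
      √(sigmaW R x) * (‖dilate R H t‖ * jap (x - t) ^ d) ≤
        Q * R ^ (-M) * (jap x)⁻¹ * jap t ^ (-2 : ℝ) := by
  obtain ⟨C, hC, hH⟩ := exists_norm_schwartz_le_jap_rpow H (|M| + d + 2 + (d + 2))
  refine ⟨(2 * (d + 1)) ^ (d + 1) * C * 2 ^ d, by positivity, fun R hR x t ht => ?_⟩
  have hR0 : 0 < R := by linarith
  have hx := jap_pos x
  have ht0 := jap_pos t
  have hxt := jap_pos (x - t)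
  have hker : ‖dilate R H t‖ ≤ C * R ^ (1 - (|M| + d + 2)) * jap t ^ (-(d + 2)) :=
    norm_dilate_le_of_one_le_abs hR (by positivity) (by positivity) hH (by linarith)
  have hjap : jap (x - t) ^ d ≤ 2 ^ d * jap x ^ d * jap t ^ d := by
    simpa [sub_eq_add_neg, jap_neg] using jap_rpow_add_le hd x (-t)
  have hweight := sqrt_sigmaW_mul_jap_rpow_le hR (by linarith : 0 ≤ d + 1) x
  have hpow : R ^ (d + 1) * R ^ (1 - (|M| + d + 2)) ≤ R ^ (-M) := by
    rw [← rpow_add hR0]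
    exact rpow_le_rpow_of_exponent_le hR (by linarith [le_abs_self M])
  calc √(sigmaW R x) * (‖dilate R H t‖ * jap (x - t) ^ d)
      ≤ √(sigmaW R x) * (C * R ^ (1 - (|M| + d + 2)) * jap t ^ (-(d + 2)) *
          (2 ^ d * jap x ^ d * jap t ^ d)) := by gcongr
    _ = √(sigmaW R x) * jap x ^ (d + 1) * (R ^ (1 - (|M| + d + 2)) * (C * 2 ^ d) * (jap x)⁻¹ *
          (jap t ^ (-(d + 2)) * jap t ^ d)) := by
        rw [rpow_add_one hx.ne']; field_simp
    _ ≤ (2 * (d + 1)) ^ (d + 1) * R ^ (d + 1) * (R ^ (1 - (|M| + d + 2)) * (C * 2 ^ d) *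
          (jap x)⁻¹ * (jap t ^ (-(d + 2)) * jap t ^ d)) := by gcongr
    _ = (2 * (d + 1)) ^ (d + 1) * C * 2 ^ d * (R ^ (d + 1) * R ^ (1 - (|M| + d + 2))) *
          (jap x)⁻¹ * jap t ^ (-2 : ℝ) := by
        rw [← rpow_add ht0, neg_add_rev, neg_add_cancel_right]; ring
    _ ≤ _ := by gcongr

/-- Either the two points are within `R`, where the weight is comparable at both, or the
translation is far. -/
lemma exists_norm_sqrt_sigmaW_mul_dilate_mul_le (H : 𝓢(ℝ, ℂ)) (hd : 0 ≤ d) (M : ℝ) :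
    ∃ Q : ℝ, 0 < Q ∧ ∀ R, 1 ≤ R → ∀ (f : ℝ → ℂ) (A : ℝ), (∀ y, ‖f y‖ ≤ A * jap y ^ d) →
      ∀ x t, ‖(√(sigmaW R x) : ℂ) * (dilate R H t * f (x - t))‖ ≤
        exp (1 / 2) * (‖dilate R H t‖ * ‖(√(sigmaW R (x - t)) : ℂ) * f (x - t)‖) +
          Q * (A * R ^ (-M)) * (jap x)⁻¹ * jap t ^ (-2 : ℝ) := by
  obtain ⟨Q, hQ, hfar⟩ := exists_sqrt_sigmaW_mul_norm_dilate_mul_jap_rpow_le H hd M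
  refine ⟨Q, hQ, fun R hR f A hf x t => ?_⟩
  have hA := nonneg_of_norm_le_mul_jap_rpow hf
  have hx := jap_pos x
  have ht0 := jap_pos t
  rw [norm_sqrt_sigmaW_mul, norm_sqrt_sigmaW_mul, norm_mul]
  rcases le_or_gt |t| R with ht | ht
  · have hnear : √(sigmaW R x) ≤ exp (1 / 2) * √(sigmaW R (x - t)) :=
      sqrt_sigmaW_le_of_abs_sub_le (by linarith) (by rwa [sub_sub_self])
    calc √(sigmaW R x) * (‖dilate R H t‖ * ‖f (x - t)‖)
        ≤ exp (1 / 2) * √(sigmaW R (x - t)) * (‖dilate R H t‖ * ‖f (x - t)‖) := by gcongr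
      _ = exp (1 / 2) * (‖dilate R H t‖ * (√(sigmaW R (x - t)) * ‖f (x - t)‖)) := by ring
      _ ≤ _ := le_add_of_nonneg_right (by positivity)
  · calc √(sigmaW R x) * (‖dilate R H t‖ * ‖f (x - t)‖)
        ≤ √(sigmaW R x) * (‖dilate R H t‖ * (A * jap (x - t) ^ d)) := by gcongr; exact hf _
      _ = A * (√(sigmaW R x) * (‖dilate R H t‖ * jap (x - t) ^ d)) := by ring
      _ ≤ A * (Q * R ^ (-M) * (jap x)⁻¹ * jap t ^ (-2 : ℝ)) :=
          mul_le_mul_of_nonneg_left (hfar R hR x t ht) hA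
      _ = Q * (A * R ^ (-M)) * (jap x)⁻¹ * jap t ^ (-2 : ℝ) := by ring
      _ ≤ _ := le_add_of_nonneg_left (by positivity)

lemma exists_enorm_sqrt_sigmaW_mul_dilate_convolution_le (H : 𝓢(ℝ, ℂ)) (hd : 0 ≤ d) (M : ℝ) :
    ∃ Q : ℝ, 0 ≤ Q ∧ ∀ R, 1 ≤ R → ∀ (f : ℝ → ℂ) (A : ℝ), (∀ y, ‖f y‖ ≤ A * jap y ^ d) →
      ∀ x, ‖(√(sigmaW R x) : ℂ) * (dilate R H ⋆[mul ℝ ℂ] f) x‖ₑ ≤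
        ENNReal.ofReal (exp (1 / 2)) *
            ((‖dilate R H ·‖ₑ) ⋆ₗ fun y => ‖(√(sigmaW R y) : ℂ) * f y‖ₑ) x +
          ENNReal.ofReal (Q * (A * R ^ (-M))) * ‖(jap x)⁻¹‖ₑ := by
  obtain ⟨Q, hQ, hpt⟩ := exists_norm_sqrt_sigmaW_mul_dilate_mul_le H hd M
  have hJ : 0 ≤ ∫ t, jap t ^ (-2 : ℝ) := integral_nonneg fun t => (rpow_pos_of_pos (jap_pos t) _).le
  refine ⟨Q * ∫ t, jap t ^ (-2 : ℝ), by positivity, fun R hR f A hf x => ?_⟩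
  have hA := nonneg_of_norm_le_mul_jap_rpow hf
  have hx := jap_pos x
  have htail : ∫⁻ t, ENNReal.ofReal (Q * (A * R ^ (-M)) * (jap x)⁻¹ * jap t ^ (-2 : ℝ)) =
      ENNReal.ofReal (Q * (∫ t, jap t ^ (-2 : ℝ)) * (A * R ^ (-M))) * ‖(jap x)⁻¹‖ₑ := by
    rw [← ofReal_integral_eq_lintegral_ofReal ((integrable_jap_rpow_neg one_lt_two).const_mul _)
      (.of_forall fun t => by have := jap_pos t; positivity), integral_const_mul,
      enorm_eq_ofReal (by positivity), ← ENNReal.ofReal_mul (by positivity)]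
    ring_nf
  rw [← htail, lconvolution_def, ← lintegral_const_mul' _ _ ofReal_ne_top, ← lintegral_add_right _
    ((continuous_jap_rpow _).const_mul _).measurable.ennreal_ofReal, convolution_def,
    ← integral_const_mul]
  refine (enorm_integral_le_lintegral_enorm _).trans (lintegral_mono fun t => ?_)
  have ht := jap_pos t
  rw [neg_add_eq_sub, ← ofReal_norm, ← ofReal_norm, ← ofReal_norm,
    ← ENNReal.ofReal_mul (by positivity), ← ENNReal.ofReal_mul (by positivity),
    ← ENNReal.ofReal_add (by positivity) (by positivity)]
  exact ENNReal.ofReal_le_ofReal (hpt R hR f A hf x t)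

lemma wSigmaL2_le_of_enorm_le {a b : ℝ≥0∞} {k f u : ℝ → ℂ} (hk : Continuous k)
    (hf : Measurable f) (hu : ∀ x, ‖(√(sigmaW R x) : ℂ) * u x‖ₑ ≤
      a * ((‖k ·‖ₑ) ⋆ₗ fun y => ‖(√(sigmaW R y) : ℂ) * f y‖ₑ) x + b * ‖(jap x)⁻¹‖ₑ) :
    wSigmaL2 R u ≤
      a * ((∫⁻ x, ‖k x‖ₑ) * wSigmaL2 R f) + b * eLpNorm (fun x => (jap x)⁻¹) 2 volume := by
  have hk' : Measurable (‖k ·‖ₑ) := hk.measurable.enorm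
  have hf' : Measurable fun y => ‖(√(sigmaW R y) : ℂ) * f y‖ₑ :=
    ((Complex.continuous_ofReal.comp (continuous_sqrt_sigmaW R)).measurable.mul hf).enorm
  have hj : Measurable fun x => ‖(jap x)⁻¹‖ₑ := continuous_jap.measurable.inv.enorm
  refine (eLpNorm_le_mul_add_mul one_le_two (measurable_lconvolution _ hk' hf') hj hu).trans ?_
  rw [wSigmaL2, ← eLpNorm_enorm fun x => (√(sigmaW R x) : ℂ) * f x,
    ← eLpNorm_enorm fun x => (jap x)⁻¹]
  gcongr
  exact eLpNorm_lconvolution_le one_le_two ofNat_ne_top hk' hf'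

lemma exists_wSigmaL2_dilate_convolution_le (H : 𝓢(ℝ, ℂ)) (hd : 0 ≤ d) (M : ℝ) :
    ∃ C : ℝ≥0∞, C ≠ ∞ ∧ ∀ R, 1 ≤ R → ∀ f : ℝ → ℂ, Measurable f →
      ∀ A : ℝ, (∀ y, ‖f y‖ ≤ A * jap y ^ d) →
        wSigmaL2 R (dilate R H ⋆[mul ℝ ℂ] f) ≤
          C * (wSigmaL2 R f + ENNReal.ofReal (A * R ^ (-M))) := by
  obtain ⟨Q, hQ, hbound⟩ := exists_enorm_sqrt_sigmaW_mul_dilate_convolution_le H hd M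
  set c := ENNReal.ofReal (exp (1 / 2)) * ∫⁻ x, ‖H x‖ₑ
  have hc : c ≠ ∞ := ENNReal.mul_ne_top ofReal_ne_top H.integrable.hasFiniteIntegral.ne
  set e := eLpNorm (fun x => (jap x)⁻¹) 2 volume
  have he_top : e ≠ ∞ := memLp_two_jap_inv.eLpNorm_ne_top
  refine ⟨c + ENNReal.ofReal Q * e, by finiteness, fun R hR f hf A hfA => ?_⟩
  calc wSigmaL2 R (dilate R H ⋆[mul ℝ ℂ] f)
      ≤ ENNReal.ofReal (exp (1 / 2)) * ((∫⁻ x, ‖H x‖ₑ) * wSigmaL2 R f) +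
          ENNReal.ofReal (Q * (A * R ^ (-M))) * e := by
        rw [← lintegral_enorm_dilate (by linarith) H]
        exact wSigmaL2_le_of_enorm_le (continuous_dilate R H.continuous) hf (hbound R hR f A hfA)
    _ = c * wSigmaL2 R f + ENNReal.ofReal Q * e * ENNReal.ofReal (A * R ^ (-M)) := by
        rw [ENNReal.ofReal_mul hQ]
        ring
    _ ≤ _ := by
        rw [mul_add]
        gcongr
        exacts [le_self_add, le_add_self]

end WeightedL2

section LittlewoodPaley

lemma exists_wSigmaL2_deriv_dilate_convolution_le {G : 𝓢(ℝ, ℂ)}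
    (hG : HasCompactSupport (𝓕 G : 𝓢(ℝ, ℂ))) (D M : ℝ) :
    ∃ C : ℝ≥0∞, C ≠ ∞ ∧ ∀ R : ℝ, 1 ≤ R → ∀ φ : ℝ → ℂ, AEStronglyMeasurable φ →
      Integrable (fun x => jap x ^ (-D) * ‖φ x‖) →
        wSigmaL2 R (deriv (dilate R G ⋆[mul ℝ ℂ] φ)) ≤
          C * (ENNReal.ofReal R * wSigmaL2 R (dilate R G ⋆[mul ℝ ℂ] φ) +
            ENNReal.ofReal (R ^ (-M)) * ENNReal.ofReal (wL1 D φ)) := by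
  obtain ⟨H, hderiv⟩ := exists_hasDerivAt_dilate_convolution hG
  obtain ⟨K, hK, hgrowth⟩ := exists_norm_dilate_convolution_le G D
  obtain ⟨C, hC, hbound⟩ := exists_wSigmaL2_dilate_convolution_le H (abs_nonneg D) (M + 2)
  refine ⟨C * (1 + ENNReal.ofReal K), by finiteness, fun R hR φ hφ hφi => ?_⟩
  have hR0 : 0 < R := by linarith
  have hdiff (x : ℝ) := hderiv D R hR φ hφ hφi x
  set f := dilate R G ⋆[mul ℝ ℂ] φ
  have hf : Measurable f :=
    (continuous_iff_continuousAt.2 fun x => (hdiff x).continuousAt).measurable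
  have hf' : deriv f = R • (dilate R H ⋆[mul ℝ ℂ] f) := funext fun x => (hdiff x).deriv
  have hremainder : R * (K * R * wL1 D φ * R ^ (-(M + 2))) = K * (R ^ (-M) * wL1 D φ) := by
    rw [neg_add, rpow_add hR0, rpow_neg hR0.le 2, Real.rpow_two]
    field_simp
  calc wSigmaL2 R (deriv f)
      ≤ ENNReal.ofReal R *
          (C * (wSigmaL2 R f + ENNReal.ofReal (K * R * wL1 D φ * R ^ (-(M + 2))))) := by
        rw [hf', wSigmaL2_const_smul hR0.le]
        gcongr
        exact hbound R hR f hf _ (hgrowth R hR φ hφi)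
    _ = C * (1 * (ENNReal.ofReal R * wSigmaL2 R f) + ENNReal.ofReal K *
          (ENNReal.ofReal (R ^ (-M)) * ENNReal.ofReal (wL1 D φ))) := by
        rw [← ENNReal.ofReal_mul (by positivity), ← ENNReal.ofReal_mul hK.le, ← hremainder,
          ENNReal.ofReal_mul hR0.le]
        ring
    _ ≤ _ := by
        rw [mul_assoc, mul_add (1 + _)]
        gcongr
        exacts [le_self_add, le_add_self]

lemma PLE_eq_dilate_convolution {R : ℝ} (hR : 0 < R) (ρ : ℝ → ℝ) (φ : ℝ → ℂ) :
    PLE ρ R φ = dilate R (invFourier ρ) ⋆[mul ℝ ℂ] φ := by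
  rw [← invFourier_rhoLE hR]
  rfl

lemma IsLPBump.hasCompactSupport {ρ : ℝ → ℝ} (hρ : IsLPBump ρ) : HasCompactSupport ρ :=
  .intro isCompact_Icc hρ.2.2.2

theorem PLE_weighted_deriv_L2_general {ρ : ℝ → ℝ} (hρ : ContDiff ℝ (⊤ : ℕ∞) ρ)
    (hc : HasCompactSupport ρ) (D M : ℝ) :
    ∃ C : ℝ, 0 < C ∧
      ∀ R : ℝ, 1 ≤ R →
        ∀ φ : ℝ → ℂ, AEStronglyMeasurable φ → Integrable (fun x => jap x ^ (-D) * ‖φ x‖) →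
          wSigmaL2 R (deriv (PLE ρ R φ)) ≤
            ENNReal.ofReal C *
              (ENNReal.ofReal R * wSigmaL2 R (PLE ρ R φ) +
                ENNReal.ofReal (R ^ (-M)) * ENNReal.ofReal (wL1 D φ)) := by
  obtain ⟨G, hG, hGρ⟩ := exists_schwartz_eq_invFourier hρ hc
  obtain ⟨C, hC, hbound⟩ := exists_wSigmaL2_deriv_dilate_convolution_le hG D M
  refine ⟨C.toReal + 1, by positivity, fun R hR φ hφ hφi => ?_⟩
  rw [PLE_eq_dilate_convolution (by linarith), ← hGρ]
  refine (hbound R hR φ hφ hφi).trans ?_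
  gcongr
  exact (le_ofReal_iff_toReal_le hC (by positivity)).2 (by linarith)

end LittlewoodPaley

/-- **Weighted derivative estimate for low-frequency projections** (Lemma 2.5, estimate (2.9)). -/
theorem PLE_weighted_deriv_L2 (ρ : ℝ → ℝ) (hρ : IsLPBump ρ) (D : ℝ) (hD : 1 ≤ D) :
    ∃ C : ℝ, 0 < C ∧
      ∀ R : ℝ, 16 ≤ R → (∃ k : ℕ, R = 2 ^ k) →
        ∀ φ : ℝ → ℂ, Measurable φ → Integrable (fun x => jap x ^ (-D) * ‖φ x‖) →
          wSigmaL2 R (deriv (PLE ρ R φ)) ≤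
            ENNReal.ofReal C *
              (ENNReal.ofReal R * wSigmaL2 R (PLE ρ R φ) +
                ENNReal.ofReal (R ^ (-D)) * ENNReal.ofReal (wL1 D φ)) := by
  obtain ⟨C, hC, hbound⟩ := PLE_weighted_deriv_L2_general hρ.1 hρ.hasCompactSupport D D
  exact ⟨C, hC, fun R hR _ φ hφ => hbound R (by linarith) φ hφ.aestronglyMeasurable⟩
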